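/- arXiv:0907.2369 — 2 statements merged into one kernel-verified Lean document; each statement's English description precedes it below -/
import Mathlib

section
/- The map Ψ⁰_{2k} on 2k × 2k complex matrices, defined on the 2×2 block decomposition X = [[X₁₁, X₁₂],[X₂₁, X₂₂]] (with k×k blocks) by Ψ⁰_{2k}(X) = (1/k)·[[𝕀_k·Tr(X₂₂), −(X₁₂ + R_k(X₂₁))],[−(X₂₁ + R_k(X₁₂)), 𝕀_k·Tr(X₁₁)]], where R_k(Y) = 𝕀_k·Tr(Y) − Y, is a positive map: it sends every positive semidefinite 2k×2k matrix to a positive semidefinite matrix. -/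
open Matrix ComplexOrder Kronecker

noncomputable section

/-- The reduction map `R_k(Y) = Tr(Y)·𝕀_k − Y` on `k × k` complex matrices. -/
def Rmap (k : ℕ) (Y : Matrix (Fin k) (Fin k) ℂ) : Matrix (Fin k) (Fin k) ℂ :=
  Y.trace • (1 : Matrix (Fin k) (Fin k) ℂ) - Y

/-- The map `Ψ⁰_{2k}` on `2k × 2k` complex matrices (indexed by `Fin k ⊕ Fin k`),
defined blockwise via the reduction map `R_k`. -/
def Psi (k : ℕ) (X : Matrix (Fin k ⊕ Fin k) (Fin k ⊕ Fin k) ℂ) :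
    Matrix (Fin k ⊕ Fin k) (Fin k ⊕ Fin k) ℂ :=
  ((k : ℂ))⁻¹ • Matrix.fromBlocks
    ((X.toBlocks₂₂.trace) • (1 : Matrix (Fin k) (Fin k) ℂ))
    (-(X.toBlocks₁₂ + Rmap k X.toBlocks₂₁))
    (-(X.toBlocks₂₁ + Rmap k X.toBlocks₁₂))
    ((X.toBlocks₁₁.trace) • (1 : Matrix (Fin k) (Fin k) ℂ))

section Helpers

variable {E : Type*} [NormedAddCommGroup E] [InnerProductSpace ℂ E]

/-- The squared norm defect is the Gram determinant. -/
theorem norm_sq_aux (a b y : E) :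
    ‖inner ℂ b y • a - inner ℂ a y • b + inner ℂ a b • y‖ ^ 2 ≤ (‖a‖ * ‖b‖ * ‖y‖) ^ 2 := by
  have hdet := (Matrix.posSemidef_gram ℂ ![a, b, y]).det_nonneg
  rw [Matrix.det_fin_three] at hdet
  simp only [Matrix.gram_apply] at hdet
  simp at hdet
  have key : ((‖inner ℂ b y • a - inner ℂ a y • b + inner ℂ a b • y‖ ^ 2 : ℝ) : ℂ)
      ≤ (((‖a‖ * ‖b‖ * ‖y‖) ^ 2 : ℝ) : ℂ) := by
    rw [← sub_nonneg]
    rw [← sub_nonneg] at hdet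
    convert hdet using 1
    push_cast
    have hn : ∀ z : E, ((‖z‖ : ℝ) : ℂ) ^ 2 = inner ℂ z z := fun z =>
      (inner_self_eq_norm_sq_to_K (𝕜 := ℂ) z).symm
    simp only [mul_pow, hn, inner_add_left, inner_add_right, inner_sub_left,
      inner_sub_right, inner_smul_left, inner_smul_right, inner_conj_symm]
    ring
  exact_mod_cast key

theorem quad_aux (a b x y : E) :
    0 ≤ inner ℂ b b * inner ℂ x x + inner ℂ a a * inner ℂ y y
      - (inner ℂ x a * inner ℂ b y - inner ℂ x b * inner ℂ a y + inner ℂ a b * inner ℂ x y)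
      - (inner ℂ a x * inner ℂ y b - inner ℂ b x * inner ℂ y a + inner ℂ b a * inner ℂ y x) := by
  set z := inner ℂ b y • a - inner ℂ a y • b + inner ℂ a b • y with hz
  have h1 : ‖z‖ ≤ ‖a‖ * ‖b‖ * ‖y‖ :=
    le_of_sq_le_sq (norm_sq_aux a b y) (by positivity)
  have h2 : (inner ℂ x z).re ≤ ‖x‖ * ‖z‖ := re_inner_le_norm (𝕜 := ℂ) x z
  have h3 : ‖x‖ * ‖z‖ ≤ ‖x‖ * (‖a‖ * ‖b‖ * ‖y‖) := by gcongr
  have hS : inner ℂ x a * inner ℂ b y - inner ℂ x b * inner ℂ a y + inner ℂ a b * inner ℂ x y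
      = inner ℂ x z := by
    simp only [hz, inner_add_right, inner_sub_right, inner_smul_right]; ring
  have hT : inner ℂ a x * inner ℂ y b - inner ℂ b x * inner ℂ y a + inner ℂ b a * inner ℂ y x
      = (starRingEnd ℂ) (inner ℂ x z) := by
    rw [← hS]
    simp only [map_add, map_sub, map_mul, inner_conj_symm]
  have hn : ∀ w : E, inner ℂ w w = ((‖w‖ : ℝ) : ℂ) ^ 2 := fun w =>
    inner_self_eq_norm_sq_to_K (𝕜 := ℂ) w
  rw [hS, hT, sub_sub, Complex.add_conj]
  simp only [hn]
  have : (0 : ℝ) ≤ ‖b‖ ^ 2 * ‖x‖ ^ 2 + ‖a‖ ^ 2 * ‖y‖ ^ 2 - 2 * (inner ℂ x z).re := by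
    nlinarith [sq_nonneg (‖b‖ * ‖x‖ - ‖a‖ * ‖y‖)]
  exact_mod_cast this

end Helpers

theorem quad_dot {k : ℕ} (a b x y : Fin k → ℂ) :
    0 ≤ (b ⬝ᵥ star b) * (x ⬝ᵥ star x) + (a ⬝ᵥ star a) * (y ⬝ᵥ star y)
      - ((a ⬝ᵥ star x) * (y ⬝ᵥ star b) - (b ⬝ᵥ star x) * (y ⬝ᵥ star a)
        + (b ⬝ᵥ star a) * (y ⬝ᵥ star x))
      - ((x ⬝ᵥ star a) * (b ⬝ᵥ star y) - (x ⬝ᵥ star b) * (a ⬝ᵥ star y)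
        + (a ⬝ᵥ star b) * (x ⬝ᵥ star y)) := by
  have h := quad_aux (WithLp.toLp 2 a : EuclideanSpace ℂ (Fin k)) (WithLp.toLp 2 b)
    (WithLp.toLp 2 x) (WithLp.toLp 2 y)
  simpa only [EuclideanSpace.inner_toLp_toLp] using h

theorem Psi_add (k : ℕ) (X Y : Matrix (Fin k ⊕ Fin k) (Fin k ⊕ Fin k) ℂ) :
    Psi k (X + Y) = Psi k X + Psi k Y := by
  have e11 : (X + Y).toBlocks₁₁ = X.toBlocks₁₁ + Y.toBlocks₁₁ := rfl
  have e12 : (X + Y).toBlocks₁₂ = X.toBlocks₁₂ + Y.toBlocks₁₂ := rfl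
  have e21 : (X + Y).toBlocks₂₁ = X.toBlocks₂₁ + Y.toBlocks₂₁ := rfl
  have e22 : (X + Y).toBlocks₂₂ = X.toBlocks₂₂ + Y.toBlocks₂₂ := rfl
  unfold Psi Rmap
  rw [← smul_add, Matrix.fromBlocks_add, e11, e12, e21, e22]
  simp only [Matrix.trace_add, add_smul]
  congr 2 <;> abel

theorem Psi_zero (k : ℕ) : Psi k 0 = 0 := by
  have h := Psi_add k 0 0
  rw [add_zero] at h
  exact left_eq_add.mp h

theorem Psi_rank_one (k : ℕ) (a b : Fin k → ℂ) :
    (Psi k (vecMulVec (Sum.elim a b) (star (Sum.elim a b)))).PosSemidef := by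
  have e11 : (vecMulVec (Sum.elim a b) (star (Sum.elim a b))).toBlocks₁₁
    = vecMulVec a (star a) := rfl
  have e12 : (vecMulVec (Sum.elim a b) (star (Sum.elim a b))).toBlocks₁₂
    = vecMulVec a (star b) := rfl
  have e21 : (vecMulVec (Sum.elim a b) (star (Sum.elim a b))).toBlocks₂₁
    = vecMulVec b (star a) := rfl
  have e22 : (vecMulVec (Sum.elim a b) (star (Sum.elim a b))).toBlocks₂₂
    = vecMulVec b (star b) := rfl
  unfold Psi Rmap
  rw [e11, e12, e21, e22]
  simp only [trace_vecMulVec]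
  have hst : ∀ u v : Fin k → ℂ, star (u ⬝ᵥ star v) = v ⬝ᵥ star u := fun u v => by
    simp [dotProduct, star_sum, mul_comm]
  refine Matrix.PosSemidef.smul ?_ (by positivity)
  refine Matrix.PosSemidef.of_dotProduct_mulVec_nonneg ?_ ?_
  · refine Matrix.IsHermitian.fromBlocks ?_ ?_ ?_
    · simp [Matrix.IsHermitian, conjTranspose_smul, hst]
    · simp [conjTranspose_smul, hst, conjTranspose_vecMulVec]
    · simp [Matrix.IsHermitian, conjTranspose_smul, hst]
  · intro w
    obtain ⟨x, y, rfl⟩ : ∃ x y, w = Sum.elim x y := ⟨w ∘ Sum.inl, w ∘ Sum.inr, by simp⟩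
    have h := quad_dot a b x y
    rw [fromBlocks_mulVec, Function.star_sumElim, sumElim_dotProduct_sumElim]
    simp only [Sum.elim_comp_inl, Sum.elim_comp_inr, neg_mulVec, add_mulVec, sub_mulVec,
      smul_mulVec, one_mulVec, vecMulVec_mulVec, dotProduct_add, dotProduct_sub, dotProduct_neg,
      dotProduct_smul, op_smul_eq_smul, smul_eq_mul]
    convert h using 1
    simp only [dotProduct_comm (star _)]
    ring

theorem stmt2 (k : ℕ) (hk : 2 ≤ k)
    (X : Matrix (Fin k ⊕ Fin k) (Fin k ⊕ Fin k) ℂ) (hX : X.PosSemidef) :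
    (Psi k X).PosSemidef := by
  obtain ⟨m, v, rfl⟩ := Matrix.posSemidef_iff_eq_sum_vecMulVec.mp hX
  clear hX
  refine Finset.sum_induction _ (fun X => (Psi k X).PosSemidef) ?_ ?_ ?_
  · intro A B hA hB
    rw [Psi_add]
    exact hA.add hB
  · rw [Psi_zero]
    exact Matrix.PosSemidef.zero
  · intro i _
    have h := Psi_rank_one k (v i ∘ Sum.inl) (v i ∘ Sum.inr)
    rwa [Sum.elim_comp_inl_inr] at h
end
end

section
/- Define φ₁ = e₁⊗e₁, φ₂ = e₁⊗e_{k+1}, φ₃ = e_k⊗e₁, φ₄ = e_k⊗e_{2k}, φ₅ = e_{k+1}⊗e₁, φ₆ = e_{k+1}⊗e_{k+1}, φ₇ = e_{k+1}⊗e_{2k} in ℂ^{2k} ⊗ ℂ^{2k}, and D_{2k} = (1/7)(|φ₁+φ₆⟩⟨φ₁+φ₆| + |φ₅−φ₄⟩⟨φ₅−φ₄| + |φ₂⟩⟨φ₂| + |φ₃⟩⟨φ₃| + |φ₇⟩⟨φ₇|). Then the partial transpose satisfies D_{2k}^Γ = (1/7)(|φ₂+φ₅⟩⟨φ₂+φ₅|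 + |φ₃−φ₇⟩⟨φ₃−φ₇| + |φ₁⟩⟨φ₁| + |φ₄⟩⟨φ₄| + |φ₆⟩⟨φ₆|). In particular both D_{2k} and D_{2k}^Γ are positive semidefinite and have Schmidt number at most 2. -/
open Matrix ComplexOrder Kronecker

noncomputable section

/-- The standard basis vector `e_i` of `ℂ^{2k}`. -/
def uvec (k : ℕ) (i : Fin k ⊕ Fin k) : (Fin k ⊕ Fin k) → ℂ := Pi.single i 1

/-- Elementary tensor `a ⊗ b` of two vectors in `ℂ^{2k}`. -/
def tensv (k : ℕ) (a b : (Fin k ⊕ Fin k) → ℂ) : (Fin k ⊕ Fin k) × (Fin k ⊕ Fin k) → ℂ :=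
  fun p => a p.1 * b p.2

/-- The rank-one projector `|v⟩⟨v|` as a matrix. -/
def projv (k : ℕ) (v : (Fin k ⊕ Fin k) × (Fin k ⊕ Fin k) → ℂ) :
    Matrix ((Fin k ⊕ Fin k) × (Fin k ⊕ Fin k)) ((Fin k ⊕ Fin k) × (Fin k ⊕ Fin k)) ℂ :=
  vecMulVec v (star v)

/-- Partial transposition (on the second tensor factor). -/
def ptI (k : ℕ)
    (M : Matrix ((Fin k ⊕ Fin k) × (Fin k ⊕ Fin k)) ((Fin k ⊕ Fin k) × (Fin k ⊕ Fin k)) ℂ) :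
    Matrix ((Fin k ⊕ Fin k) × (Fin k ⊕ Fin k)) ((Fin k ⊕ Fin k) × (Fin k ⊕ Fin k)) ℂ :=
  Matrix.of fun p q => M (p.1, q.2) (q.1, p.2)

/-- `σ` has Schmidt number at most `2`: it is a sum of (unnormalized) rank-one
projectors onto vectors of Schmidt rank at most `2`. -/
def SchmidtNumberLE2 (k : ℕ)
    (σ : Matrix ((Fin k ⊕ Fin k) × (Fin k ⊕ Fin k)) ((Fin k ⊕ Fin k) × (Fin k ⊕ Fin k)) ℂ) :
    Prop :=
  ∃ (n : ℕ) (v : Fin n → ((Fin k ⊕ Fin k) × (Fin k ⊕ Fin k) → ℂ)),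
    (∀ m, ∃ a₁ b₁ a₂ b₂ : (Fin k ⊕ Fin k) → ℂ, v m = tensv k a₁ b₁ + tensv k a₂ b₂) ∧
    σ = ∑ m, projv k (v m)

theorem star_uvec_apply (k : ℕ) (i j : Fin k ⊕ Fin k) :
    (starRingEnd ℂ) (uvec k i j) = uvec k i j := by
  unfold uvec
  by_cases h : j = i
  · subst h; simp
  · simp [h]

theorem projv_posSemidef (k : ℕ) (v : (Fin k ⊕ Fin k) × (Fin k ⊕ Fin k) → ℂ) :
    (projv k v).PosSemidef := by
  unfold projv
  exact Matrix.posSemidef_vecMulVec_self_star v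

theorem seventh_projv (k : ℕ) (v : (Fin k ⊕ Fin k) × (Fin k ⊕ Fin k) → ℂ) :
    (7 : ℂ)⁻¹ • projv k v = projv k (((Real.sqrt 7 : ℝ) : ℂ)⁻¹ • v) := by
  have h : ((Real.sqrt 7 : ℝ) : ℂ) * ((Real.sqrt 7 : ℝ) : ℂ) = 7 := by
    rw [← Complex.ofReal_mul, Real.mul_self_sqrt (by norm_num)]; norm_num
  ext p q
  simp only [projv, vecMulVec_apply, Matrix.smul_apply, Pi.smul_apply, Pi.star_apply,
    smul_eq_mul, star_mul', RCLike.star_def, map_inv₀, Complex.conj_ofReal]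
  rw [← h, mul_inv]
  ring

theorem schmidt_five (k : ℕ) (a b c d : Fin 5 → (Fin k ⊕ Fin k) → ℂ)
    (σ : Matrix ((Fin k ⊕ Fin k) × (Fin k ⊕ Fin k)) ((Fin k ⊕ Fin k) × (Fin k ⊕ Fin k)) ℂ)
    (h : σ = (7 : ℂ)⁻¹ • ∑ m, projv k (tensv k (a m) (b m) + tensv k (c m) (d m))) :
    SchmidtNumberLE2 k σ := by
  refine ⟨5, fun m => ((Real.sqrt 7 : ℝ) : ℂ)⁻¹ •
    (tensv k (a m) (b m) + tensv k (c m) (d m)), fun m => ?_, ?_⟩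
  · refine ⟨((Real.sqrt 7 : ℝ) : ℂ)⁻¹ • a m, b m, ((Real.sqrt 7 : ℝ) : ℂ)⁻¹ • c m, d m, ?_⟩
    ext p
    simp only [tensv, Pi.add_apply, Pi.smul_apply, smul_eq_mul]
    ring
  · rw [h, Finset.smul_sum]
    exact Finset.sum_congr rfl fun m _ => seventh_projv k _

theorem tensv_zero (k : ℕ) (b : (Fin k ⊕ Fin k) → ℂ) : tensv k 0 b = 0 := by
  ext p; simp [tensv]

theorem tensv_neg (k : ℕ) (a b : (Fin k ⊕ Fin k) → ℂ) : tensv k (-a) b = -tensv k a b := by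
  ext p; simp [tensv]

theorem seventh_psd (k : ℕ) (v₁ v₂ v₃ v₄ v₅ : (Fin k ⊕ Fin k) × (Fin k ⊕ Fin k) → ℂ) :
    ((7 : ℂ)⁻¹ • (projv k v₁ + projv k v₂ + projv k v₃ + projv k v₄ + projv k v₅)).PosSemidef := by
  simp only [smul_add, seventh_projv]
  exact ((((projv_posSemidef k _).add (projv_posSemidef k _)).add (projv_posSemidef k _)).add
    (projv_posSemidef k _)).add (projv_posSemidef k _)

theorem seventh_schmidt (k : ℕ) (a₁ b₁ a₂ b₂ c₁ d₁ c₂ d₂ x₁ y₁ x₂ y₂ x₃ y₃ :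
    (Fin k ⊕ Fin k) → ℂ) :
    SchmidtNumberLE2 k ((7 : ℂ)⁻¹ • (projv k (tensv k a₁ b₁ + tensv k a₂ b₂)
      + projv k (tensv k c₁ d₁ - tensv k c₂ d₂)
      + projv k (tensv k x₁ y₁) + projv k (tensv k x₂ y₂) + projv k (tensv k x₃ y₃))) := by
  apply schmidt_five k ![a₁, c₁, x₁, x₂, x₃] ![b₁, d₁, y₁, y₂, y₃]
    ![a₂, -c₂, 0, 0, 0] ![b₂, d₂, 0, 0, 0]
  simp [Fin.sum_univ_five, tensv_zero, tensv_neg, sub_eq_add_neg]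

theorem stmt15 (k : ℕ) (hk : 2 ≤ k)
    (φ₁ φ₂ φ₃ φ₄ φ₅ φ₆ φ₇ : (Fin k ⊕ Fin k) × (Fin k ⊕ Fin k) → ℂ)
    (h₁ : φ₁ = tensv k (uvec k (Sum.inl ⟨0, by omega⟩)) (uvec k (Sum.inl ⟨0, by omega⟩)))
    (h₂ : φ₂ = tensv k (uvec k (Sum.inl ⟨0, by omega⟩)) (uvec k (Sum.inr ⟨0, by omega⟩)))
    (h₃ : φ₃ = tensv k (uvec k (Sum.inl ⟨k - 1, by omega⟩)) (uvec k (Sum.inl ⟨0, by omega⟩)))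
    (h₄ : φ₄ = tensv k (uvec k (Sum.inl ⟨k - 1, by omega⟩)) (uvec k (Sum.inr ⟨k - 1, by omega⟩)))
    (h₅ : φ₅ = tensv k (uvec k (Sum.inr ⟨0, by omega⟩)) (uvec k (Sum.inl ⟨0, by omega⟩)))
    (h₆ : φ₆ = tensv k (uvec k (Sum.inr ⟨0, by omega⟩)) (uvec k (Sum.inr ⟨0, by omega⟩)))
    (h₇ : φ₇ = tensv k (uvec k (Sum.inr ⟨0, by omega⟩)) (uvec k (Sum.inr ⟨k - 1, by omega⟩)))
    (D : Matrix ((Fin k ⊕ Fin k) × (Fin k ⊕ Fin k)) ((Fin k ⊕ Fin k) × (Fin k ⊕ Fin k)) ℂ)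
    (hD : D = (7 : ℂ)⁻¹ • (projv k (φ₁ + φ₆) + projv k (φ₅ - φ₄)
        + projv k φ₂ + projv k φ₃ + projv k φ₇)) :
    ptI k D = (7 : ℂ)⁻¹ • (projv k (φ₂ + φ₅) + projv k (φ₃ - φ₇)
        + projv k φ₁ + projv k φ₄ + projv k φ₆) ∧
    D.PosSemidef ∧ (ptI k D).PosSemidef ∧
    SchmidtNumberLE2 k D ∧ SchmidtNumberLE2 k (ptI k D) := by
  have key : ptI k D = (7 : ℂ)⁻¹ • (projv k (φ₂ + φ₅) + projv k (φ₃ - φ₇)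
        + projv k φ₁ + projv k φ₄ + projv k φ₆) := by
    subst hD h₁ h₂ h₃ h₄ h₅ h₆ h₇
    ext p q
    simp only [ptI, Matrix.of_apply, projv, vecMulVec_apply, Matrix.smul_apply, Matrix.add_apply,
      Pi.star_apply, Pi.add_apply, Pi.sub_apply, tensv, smul_eq_mul, RCLike.star_def, map_add,
      map_sub, map_mul, star_uvec_apply]
    ring
  refine ⟨key, ?_, ?_, ?_, ?_⟩
  · rw [hD]; exact seventh_psd k _ _ _ _ _
  · rw [key]; exact seventh_psd k _ _ _ _ _
  · rw [hD, h₁, h₂, h₃, h₄, h₅, h₆, h₇]; apply seventh_schmidt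
  · rw [key, h₁, h₂, h₃, h₄, h₅, h₆, h₇]; apply seventh_schmidt
end
end
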